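/- Let ρ = Σ_{a=1}^n p_a Π_a and σ as above with d_HS(ρ,σ) ≤ δ < Δ/(1+√d). If |p_a − s_k| ≤ δ, then |p_a − ⟨ψ_k|ρ|ψ_k⟩| ≤ (4(d−1)/Δ) δ². -/

import Mathlib

open Matrix

/-!
Let `v` be a unit vector with `σ v = z v`. The weights `w b = ‖P b v‖²` form a probability
distribution on the eigenvalues of `ρ`, with mean `⟪v, ρ v⟫`. Its second moment about `z` is
`∑ b, ‖p b - z‖² w b = ‖(ρ - σ) v‖²`, which is at most the squared Frobenius norm of `ρ - σ`, hence
at most `δ²`. As `z` lies within `Δ / 2` of `p a`, every other eigenvalue satisfies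
`Δ ≤ ‖p a - p b‖ ≤ 2 ‖p b - z‖`, so `‖p a - p b‖ ≤ (4 / Δ) ‖p b - z‖²`, and averaging gives the
bound with constant `4 / Δ`. In dimension one the claimed bound is zero: there `v` is an eigenvector
of `ρ`, and the only eigenvalue of `ρ` close enough to `z` is `p a`.
-/

section WeightedMean

variable {F : Type*} [SeminormedAddCommGroup F] {x y z : F} {Δ : ℝ}

lemma norm_sub_le_four_div_mul_norm_sub_sq (hΔ : 0 < Δ) (hgap : Δ ≤ ‖x - y‖)
    (hz : 2 * ‖x - z‖ ≤ Δ) : ‖x - y‖ ≤ 4 / Δ * ‖y - z‖ ^ 2 := by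
  have hle : ‖x - y‖ ≤ 2 * ‖y - z‖ := by
    have := norm_sub_le_norm_sub_add_norm_sub x z y
    rw [norm_sub_rev z] at this
    linarith
  rw [div_mul_eq_mul_div, le_div_iff₀ hΔ]
  calc ‖x - y‖ * Δ ≤ ‖x - y‖ * ‖x - y‖ := by gcongr
    _ ≤ (2 * ‖y - z‖) * (2 * ‖y - z‖) := by gcongr
    _ = 4 * ‖y - z‖ ^ 2 := by ring

lemma norm_sub_sum_smul_le {ι : Type*} [Fintype ι] [NormedSpace ℝ F] {p : ι → F} {a : ι}
    {w : ι → ℝ} (hw : ∀ b, 0 ≤ w b) (hw_sum : ∑ b, w b = 1) (hΔ : 0 < Δ)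
    (hgap : ∀ b, b ≠ a → Δ ≤ ‖p a - p b‖) (hz : 2 * ‖p a - z‖ ≤ Δ) :
    ‖p a - ∑ b, w b • p b‖ ≤ 4 / Δ * ∑ b, ‖p b - z‖ ^ 2 * w b := by
  have hbound (b : ι) : ‖p a - p b‖ ≤ 4 / Δ * ‖p b - z‖ ^ 2 := by
    by_cases hb : b = a
    · rw [hb, sub_self, norm_zero]
      positivity
    · exact norm_sub_le_four_div_mul_norm_sub_sq hΔ (hgap b hb) hz
  calc ‖p a - ∑ b, w b • p b‖ = ‖∑ b, w b • (p a - p b)‖ := by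
        simp only [smul_sub, Finset.sum_sub_distrib, ← Finset.sum_smul, hw_sum, one_smul]
    _ ≤ ∑ b, ‖p a - p b‖ * w b := by
        refine norm_sum_le_of_le _ fun b _ ↦ ?_
        rw [norm_smul, Real.norm_of_nonneg (hw b), mul_comm]
    _ ≤ ∑ b, 4 / Δ * ‖p b - z‖ ^ 2 * w b :=
        Finset.sum_le_sum fun b _ ↦ mul_le_mul_of_nonneg_right (hbound b) (hw b)
    _ = 4 / Δ * ∑ b, ‖p b - z‖ ^ 2 * w b := by simp only [Finset.mul_sum, mul_assoc]

end WeightedMean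

section SpectralDecomposition

section Module

variable {R M ι : Type*} [Semiring R] [AddCommMonoid M] [Module R M] [Fintype ι]
  {P : ι → Module.End R M}

lemma sum_apply_eq_self (hP : CompleteOrthogonalIdempotents P) (v : M) : ∑ b, P b v = v := by
  rw [← LinearMap.sum_apply, hP.complete, Module.End.one_apply]

lemma apply_sum_smul_apply (hP : OrthogonalIdempotents P) (c : ι → R) (b : ι) (v : M) :
    P b (∑ b', c b' • P b' v) = c b • P b v := by
  classical
  simp [← Module.End.mul_apply, hP.mul_eq, apply_ite, DFunLike.ite_apply]

end Module

lemma exists_eq_of_sum_smul_apply_eq_smul {R M ι : Type*} [Ring R] [IsDomain R] [AddCommGroup M]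
    [Module R M] [Module.IsTorsionFree R M] [Fintype ι] {P : ι → Module.End R M}
    (hP : CompleteOrthogonalIdempotents P) {p : ι → R} {r : R} {v : M} (hv : v ≠ 0)
    (h : ∑ b, p b • P b v = r • v) : ∃ b, p b = r := by
  obtain ⟨b, -, hb⟩ := Finset.exists_ne_zero_of_sum_ne_zero ((sum_apply_eq_self hP v).trans_ne hv)
  refine ⟨b, smul_left_injective R hb ?_⟩
  calc p b • P b v = P b (∑ b', p b' • P b' v) :=
        (apply_sum_smul_apply hP.toOrthogonalIdempotents p b v).symm
    _ = r • P b v := by rw [h, map_smul]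

variable {𝕜 E ι : Type*} [RCLike 𝕜] [NormedAddCommGroup E] [InnerProductSpace 𝕜 E]

lemma inner_apply_self_eq_norm_sq {T : E →ₗ[𝕜] E} (hidem : IsIdempotentElem T)
    (hsymm : T.IsSymmetric) (v : E) : inner 𝕜 v (T v) = (‖T v‖ : 𝕜) ^ 2 := by
  rw [← inner_self_eq_norm_sq_to_K, hsymm, ← Module.End.mul_apply, hidem.eq]

lemma eq_inner_smul_of_finrank_eq_one (hE : Module.finrank 𝕜 E = 1) {v : E} (hv : ‖v‖ = 1)
    (x : E) : x = inner 𝕜 v x • v := by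
  have hv0 : v ≠ 0 := norm_ne_zero_iff.mp (by simp [hv])
  obtain ⟨c, rfl⟩ := (finrank_eq_one_iff_of_nonzero' v hv0).mp hE x
  simp [inner_smul_right, inner_self_eq_norm_sq_to_K, hv]

variable [Fintype ι] {P : ι → E →ₗ[𝕜] E}

lemma inner_sum_smul_apply (hP : ∀ b, IsIdempotentElem (P b)) (hsymm : ∀ b, (P b).IsSymmetric)
    (c : ι → 𝕜) (v : E) : inner 𝕜 v (∑ b, c b • P b v) = ∑ b, ‖P b v‖ ^ 2 • c b := by
  simp only [inner_sum, inner_smul_right, inner_apply_self_eq_norm_sq (hP _) (hsymm _),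
    RCLike.real_smul_eq_coe_mul, RCLike.ofReal_pow, mul_comm]

lemma norm_sum_smul_apply_sq (hP : OrthogonalIdempotents P) (hsymm : ∀ b, (P b).IsSymmetric)
    (c : ι → 𝕜) (v : E) : ‖∑ b, c b • P b v‖ ^ 2 = ∑ b, ‖c b‖ ^ 2 * ‖P b v‖ ^ 2 := by
  have hterm (b : ι) :
      inner 𝕜 (c b • P b v) (∑ b', c b' • P b' v) = ((‖c b‖ ^ 2 * ‖P b v‖ ^ 2 : ℝ) : 𝕜) := by
    rw [inner_smul_left, hsymm, apply_sum_smul_apply hP, inner_smul_right,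
      inner_apply_self_eq_norm_sq (hP.idem b) (hsymm b), ← mul_assoc, RCLike.conj_mul]
    push_cast
    rfl
  rw [← RCLike.ofReal_inj (K := 𝕜), RCLike.ofReal_pow, ← inner_self_eq_norm_sq_to_K, sum_inner,
    RCLike.ofReal_sum]
  exact Finset.sum_congr rfl fun b _ ↦ hterm b

variable {p : ι → 𝕜} {v : E} {z : 𝕜} {a : ι} {δ Δ : ℝ}

lemma sum_norm_apply_sq (hP : CompleteOrthogonalIdempotents P) (hsymm : ∀ b, (P b).IsSymmetric)
    (v : E) : ∑ b, ‖P b v‖ ^ 2 = ‖v‖ ^ 2 := by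
  simpa [sum_apply_eq_self hP] using
    (norm_sum_smul_apply_sq hP.toOrthogonalIdempotents hsymm 1 v).symm

lemma norm_sum_smul_apply_sub_smul_sq (hP : CompleteOrthogonalIdempotents P)
    (hsymm : ∀ b, (P b).IsSymmetric) (p : ι → 𝕜) (z : 𝕜) (v : E) :
    ‖∑ b, p b • P b v - z • v‖ ^ 2 = ∑ b, ‖p b - z‖ ^ 2 * ‖P b v‖ ^ 2 := by
  rw [← norm_sum_smul_apply_sq hP.toOrthogonalIdempotents hsymm]
  simp only [sub_smul, Finset.sum_sub_distrib, ← Finset.smul_sum, sum_apply_eq_self hP]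

lemma norm_sub_inner_sum_smul_apply_le (hP : CompleteOrthogonalIdempotents P)
    (hsymm : ∀ b, (P b).IsSymmetric) (hv : ‖v‖ = 1) (hΔ : 0 < Δ)
    (hgap : ∀ b, b ≠ a → Δ ≤ ‖p a - p b‖) (hz : 2 * ‖p a - z‖ ≤ Δ) :
    ‖p a - inner 𝕜 v (∑ b, p b • P b v)‖ ≤ 4 / Δ * ‖∑ b, p b • P b v - z • v‖ ^ 2 := by
  rw [inner_sum_smul_apply hP.idem hsymm, norm_sum_smul_apply_sub_smul_sq hP hsymm]
  exact norm_sub_sum_smul_le (fun b ↦ sq_nonneg _) (by simp [sum_norm_apply_sq hP hsymm, hv])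
    hΔ hgap hz

lemma inner_sum_smul_apply_eq_of_finrank_eq_one (hE : Module.finrank 𝕜 E = 1)
    (hP : CompleteOrthogonalIdempotents P) (hv : ‖v‖ = 1)
    (hgap : ∀ b, b ≠ a → ‖p a - z‖ + ‖∑ b', p b' • P b' v - z • v‖ < ‖p a - p b‖) :
    inner 𝕜 v (∑ b, p b • P b v) = p a := by
  have heigen := eq_inner_smul_of_finrank_eq_one hE hv (∑ b, p b • P b v)
  have hv0 : v ≠ 0 := norm_ne_zero_iff.mp (by simp [hv])
  obtain ⟨b, hb⟩ := exists_eq_of_sum_smul_apply_eq_smul hP hv0 heigen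
  have hres : ‖∑ b, p b • P b v - z • v‖ = ‖z - p b‖ := by
    rw [heigen, ← hb, ← sub_smul, norm_smul, hv, mul_one, norm_sub_rev]
  have hba : b = a := by
    by_contra hne
    have := hgap b hne
    rw [hres] at this
    exact this.not_ge (norm_sub_le_norm_sub_add_norm_sub ..)
  rw [← hb, hba]

theorem norm_sub_inner_sum_smul_apply_le_finrank [FiniteDimensional 𝕜 E]
    (hP : CompleteOrthogonalIdempotents P) (hsymm : ∀ b, (P b).IsSymmetric) (hv : ‖v‖ = 1)
    (hres : ‖∑ b, p b • P b v - z • v‖ ≤ δ) (hgap : ∀ b, b ≠ a → Δ ≤ ‖p a - p b‖)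
    (hδΔ : 2 * δ < Δ) (hz : ‖p a - z‖ ≤ δ) :
    ‖p a - inner 𝕜 v (∑ b, p b • P b v)‖ ≤ 4 * (Module.finrank 𝕜 E - 1) / Δ * δ ^ 2 := by
  have hΔ : 0 < Δ := by linarith [norm_nonneg (p a - z)]
  have hfinrank : 0 < Module.finrank 𝕜 E :=
    have : Nontrivial E := ⟨v, 0, norm_ne_zero_iff.mp (by simp [hv])⟩
    Module.finrank_pos
  obtain hE | hE := (Nat.succ_le_iff.mpr hfinrank).eq_or_lt'
  · rw [inner_sum_smul_apply_eq_of_finrank_eq_one (z := z) hE hP hv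
      fun b hb ↦ by linarith [hgap b hb], hE]
    simp
  · have hd : (2 : ℝ) ≤ Module.finrank 𝕜 E := mod_cast hE
    calc ‖p a - inner 𝕜 v (∑ b, p b • P b v)‖ ≤ 4 / Δ * ‖∑ b, p b • P b v - z • v‖ ^ 2 :=
          norm_sub_inner_sum_smul_apply_le hP hsymm hv hΔ hgap (by linarith)
      _ ≤ 4 / Δ * δ ^ 2 := by gcongr
      _ ≤ 4 * (Module.finrank 𝕜 E - 1) / Δ * δ ^ 2 := by
          gcongr
          linarith

end SpectralDecomposition

section Matrices

lemma sum_smul_vecMulVec_star_mulVec {R m ι : Type*} [CommSemiring R] [Star R] [Fintype m]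
    [Fintype ι] [DecidableEq ι] {ψ : ι → m → R}
    (hψ : ∀ k l, star (ψ k) ⬝ᵥ ψ l = if k = l then 1 else 0) (s : ι → R) (k : ι) :
    (∑ l, s l • vecMulVec (ψ l) (star (ψ l))) *ᵥ ψ k = s k • ψ k := by
  simp [sum_mulVec, smul_mulVec, vecMulVec_mulVec, hψ]

open scoped Matrix.Norms.Frobenius

variable {𝕜 m n ι : Type*} [RCLike 𝕜] [Fintype ι]

lemma isHermitian_sum_ofReal_smul {A : ι → Matrix m m 𝕜} (hA : ∀ b, (A b).IsHermitian)
    (c : ι → ℝ) : (∑ b, (c b : 𝕜) • A b).IsHermitian :=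
  isSelfAdjoint_sum _ fun b _ ↦ (hA b).smul (RCLike.conj_ofReal (c b))

variable [Fintype m] [Fintype n]

lemma completeOrthogonalIdempotents_toEuclideanLin [DecidableEq m] {P : ι → Matrix m m 𝕜}
    (hP : CompleteOrthogonalIdempotents P) :
    CompleteOrthogonalIdempotents (R := Module.End 𝕜 (EuclideanSpace 𝕜 m))
      fun b ↦ toEuclideanLin (P b) :=
  hP.map (toLpLinAlgEquiv (R := 𝕜) (n := m) 2).toAlgHom.toRingHom

lemma frobenius_norm_eq_sqrt_re_trace (A : Matrix m n 𝕜) :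
    ‖A‖ = √(RCLike.re (Aᴴ * A).trace) := by
  rw [frobenius_norm_def, ← Real.sqrt_eq_rpow, Finset.sum_comm]
  congr 1
  simp only [trace, diag_apply, mul_apply, conjTranspose_apply, RCLike.star_def, RCLike.conj_mul,
    map_sum, ← RCLike.ofReal_pow, RCLike.ofReal_re, Real.rpow_two]

lemma norm_toLp_mulVec_le_frobenius_norm_mul (A : Matrix m n 𝕜) (v : n → 𝕜) :
    ‖WithLp.toLp 2 (A *ᵥ v)‖ ≤ ‖A‖ * ‖WithLp.toLp 2 v‖ := by
  simpa only [← frobenius_norm_replicateCol (ι := Unit), replicateCol_mulVec] using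
    frobenius_norm_mul A (replicateCol Unit v)

lemma norm_toLp_eq_one {v : m → 𝕜} (hv : star v ⬝ᵥ v = 1) : ‖WithLp.toLp 2 v‖ = 1 := by
  rw [norm_eq_sqrt_re_inner (𝕜 := 𝕜), EuclideanSpace.inner_toLp_toLp, dotProduct_comm, hv,
    RCLike.one_re, Real.sqrt_one]

theorem stmt_11_general [DecidableEq m] {P : ι → Matrix m m 𝕜} (hPh : ∀ b, (P b).IsHermitian)
    (hP : CompleteOrthogonalIdempotents P) {p : ι → 𝕜} {ρ σ : Matrix m m 𝕜}
    (hρ : ρ = ∑ b, p b • P b) {v : m → 𝕜} (hv : star v ⬝ᵥ v = 1) {z : 𝕜} (hσv : σ *ᵥ v = z • v)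
    {δ Δ : ℝ} (hdist : ‖ρ - σ‖ ≤ δ) {a : ι} (hgap : ∀ b, b ≠ a → Δ ≤ ‖p a - p b‖)
    (hδΔ : 2 * δ < Δ) (hz : ‖p a - z‖ ≤ δ) :
    ‖p a - star v ⬝ᵥ ρ *ᵥ v‖ ≤ 4 * (Fintype.card m - 1) / Δ * δ ^ 2 := by
  let u : EuclideanSpace 𝕜 m := WithLp.toLp 2 v
  have hu : ‖u‖ = 1 := norm_toLp_eq_one hv
  have hρu : ∑ b, p b • (toEuclideanLin (P b)) u = WithLp.toLp 2 (ρ *ᵥ v) := by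
    simp [hρ, sum_mulVec, smul_mulVec, u, toLpLin_apply]
  have hres : ‖WithLp.toLp 2 (ρ *ᵥ v) - z • u‖ ≤ δ := by
    calc ‖WithLp.toLp 2 (ρ *ᵥ v) - z • u‖ = ‖WithLp.toLp 2 ((ρ - σ) *ᵥ v)‖ := by
          rw [sub_mulVec, hσv, WithLp.toLp_sub, WithLp.toLp_smul]
      _ ≤ ‖ρ - σ‖ * ‖u‖ := norm_toLp_mulVec_le_frobenius_norm_mul _ _
      _ ≤ δ := by rwa [hu, mul_one]
  rw [← hρu] at hres
  have hle := norm_sub_inner_sum_smul_apply_le_finrank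
    (completeOrthogonalIdempotents_toEuclideanLin hP)
    (fun b ↦ isSymmetric_toEuclideanLin_iff.mpr (hPh b)) hu hres hgap hδΔ hz
  rwa [hρu, finrank_euclideanSpace, EuclideanSpace.inner_eq_star_dotProduct,
    dotProduct_comm] at hle

end Matrices

lemma two_mul_lt_of_lt_div_one_add {x δ Δ : ℝ} (hδ : 0 ≤ δ) (hx : 1 ≤ x) (h : δ < Δ / (1 + x)) :
    2 * δ < Δ := by
  calc 2 * δ ≤ δ * (1 + x) := by nlinarith
    _ < Δ := (lt_div_iff₀ (by positivity)).mp h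

theorem stmt_11 (d n : ℕ)
    (P : Fin n → Matrix (Fin d) (Fin d) ℂ)
    (hPh : ∀ a, (P a).IsHermitian)
    (hPo : ∀ a b, P a * P b = if a = b then P a else 0)
    (hP1 : ∑ a, P a = 1)
    (p : Fin n → ℝ) (hpinj : Function.Injective p)
    (ψ : Fin d → (Fin d → ℂ))
    (hψ : ∀ k l, star (ψ k) ⬝ᵥ ψ l = if k = l then 1 else 0)
    (s : Fin d → ℝ)
    (ρ σ : Matrix (Fin d) (Fin d) ℂ)
    (hρ : ρ = ∑ a, (p a : ℂ) • P a)
    (hσ : σ = ∑ k, (s k : ℂ) • vecMulVec (ψ k) (star (ψ k)))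
    (δ : ℝ) (hδ0 : 0 ≤ δ)
    (hdist : Real.sqrt (((ρ - σ) * (ρ - σ)).trace.re) ≤ δ)
    (hn : 2 ≤ n)
    (Δ : ℝ) (hΔ : ∀ a b, a ≠ b → Δ ≤ |p a - p b|)
    (hΔex : ∃ a b, a ≠ b ∧ Δ = |p a - p b|)
    (hδΔ : δ < Δ / (1 + Real.sqrt d)) :
    ∀ a k, |p a - s k| ≤ δ →
      |p a - (star (ψ k) ⬝ᵥ ρ.mulVec (ψ k)).re| ≤ (4 * (d - 1) / Δ) * δ ^ 2 := by
  intro a k hk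
  have hδ : 2 * δ < Δ :=
    two_mul_lt_of_lt_div_one_add hδ0 (Real.one_le_sqrt.mpr (mod_cast Fin.pos k)) hδΔ
  have hP : CompleteOrthogonalIdempotents P :=
    ⟨OrthogonalIdempotents.iff_mul_eq.mpr hPo, hP1⟩
  have hρσ : (ρ - σ).IsHermitian := hρ ▸ hσ ▸ (isHermitian_sum_ofReal_smul hPh p).sub
    (isHermitian_sum_ofReal_smul (fun l ↦ by simp [IsHermitian, conjTranspose_vecMulVec]) s)
  have hHS : √(RCLike.re ((ρ - σ)ᴴ * (ρ - σ)).trace) ≤ δ := by rwa [hρσ.eq]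
  have hψk : σ *ᵥ ψ k = (s k : ℂ) • ψ k := hσ ▸ sum_smul_vecMulVec_star_mulVec hψ _ k
  have hnorm (x y : ℝ) : ‖(x : ℂ) - y‖ = |x - y| := by
    rw [← Complex.ofReal_sub, Complex.norm_real, Real.norm_eq_abs]
  calc |p a - (star (ψ k) ⬝ᵥ ρ *ᵥ ψ k).re| ≤ ‖(p a : ℂ) - star (ψ k) ⬝ᵥ ρ *ᵥ ψ k‖ := by
        simpa using Complex.abs_re_le_norm ((p a : ℂ) - star (ψ k) ⬝ᵥ ρ *ᵥ ψ k)
    _ ≤ 4 * (d - 1) / Δ * δ ^ 2 := by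
        simpa using stmt_11_general hPh hP hρ (by simp [hψ]) hψk
          ((frobenius_norm_eq_sqrt_re_trace _).trans_le hHS)
          (fun b hb ↦ (hΔ a b hb.symm).trans_eq (hnorm ..).symm) hδ ((hnorm ..).trans_le hk)
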